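/- Let μ be an even isotropic measure on S^{n-1}, C = conv(supp μ), and H ∈ G_{n,k}. Then W(C° ∩ H) ≤ √(n/k) · W(B_∞^k), with equality if and only if C° ∩ H = √(n/k) B_∞^k, where B_∞^k is the unit cube in H. -/

import Mathlib

open MeasureTheory
open scoped RealInnerProductSpace ENNReal Pointwise

/-- The support of a measure. -/
def msupport {α : Type*} [TopologicalSpace α] [MeasurableSpace α] (μ : Measure α) : Set α :=
  {x | ∀ U ∈ nhds x, 0 < μ U}

/-- Support function `h_K(x) = sup {⟨x,y⟩ : y ∈ K}`. -/
noncomputable def suppFn {n : ℕ} (K : Set (EuclideanSpace ℝ (Fin n)))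
    (x : EuclideanSpace ℝ (Fin n)) : ℝ :=
  sSup ((fun y => ⟪x, y⟫) '' K)

/-- The volume `ω_k` of the `k`-dimensional Euclidean unit ball. -/
noncomputable def omegaBall (k : ℕ) : ℝ :=
  (volume (Metric.ball (0 : EuclideanSpace ℝ (Fin k)) 1)).toReal

/-- The mean width of a body contained in a `k`-dimensional subspace `H`, computed within `H`. -/
noncomputable def meanWidthIn {n : ℕ} (H : Submodule ℝ (EuclideanSpace ℝ (Fin n))) (k : ℕ)
    (K : Set (EuclideanSpace ℝ (Fin n))) : ℝ :=
  (2 / (k * omegaBall k)) *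
    ∫ u in Metric.sphere (0 : EuclideanSpace ℝ (Fin n)) 1 ∩
      (H : Set (EuclideanSpace ℝ (Fin n))), suppFn K u ∂(μH[(k : ℝ) - 1])

/-- The polar body `K° = {x : ⟨x,y⟩ ≤ 1 for all y ∈ K}`. -/
def polarBody {n : ℕ} (K : Set (EuclideanSpace ℝ (Fin n))) : Set (EuclideanSpace ℝ (Fin n)) :=
  {x | ∀ y ∈ K, ⟪x, y⟫ ≤ 1}

/-- `S` is a unit cube `B_∞^k` in `H`: `{x ∈ H : |⟨x, v_i⟩| ≤ 1}` for an orthonormal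
family `(v_i)` in `H`. -/
def IsCube {n : ℕ} (H : Submodule ℝ (EuclideanSpace ℝ (Fin n))) (k : ℕ)
    (S : Set (EuclideanSpace ℝ (Fin n))) : Prop :=
  ∃ v : Fin k → EuclideanSpace ℝ (Fin n),
    Orthonormal ℝ v ∧ (∀ i, v i ∈ H) ∧
    S = {x | x ∈ H ∧ ∀ i, |⟪x, v i⟫| ≤ 1}


namespace MW

variable {n : ℕ}

/-- The unit sphere of `H`. -/
def sph (H : Submodule ℝ (EuclideanSpace ℝ (Fin n))) : Set (EuclideanSpace ℝ (Fin n)) :=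
  Metric.sphere (0 : EuclideanSpace ℝ (Fin n)) 1 ∩ (H : Set (EuclideanSpace ℝ (Fin n)))

lemma isCompact_sph (H : Submodule ℝ (EuclideanSpace ℝ (Fin n))) : IsCompact (sph H) :=
  (isCompact_sphere _ _).inter_right H.closed_of_finiteDimensional

lemma expand {k : ℕ} {H : Submodule ℝ (EuclideanSpace ℝ (Fin n))}
    (hH : Module.finrank ℝ H = k) {v : Fin k → EuclideanSpace ℝ (Fin n)}
    (hv : Orthonormal ℝ v) (hvH : ∀ i, v i ∈ H) {x : EuclideanSpace ℝ (Fin n)} (hx : x ∈ H) :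
    ∑ i, ⟪v i, x⟫ • v i = x := by
  have hspan : Submodule.span ℝ (Set.range v) = H := by
    apply Submodule.eq_of_le_of_finrank_eq
    · rw [Submodule.span_le]
      rintro _ ⟨i, rfl⟩
      exact hvH i
    · rw [finrank_span_eq_card hv.linearIndependent, hH, Fintype.card_fin]
  rw [← hspan] at hx
  obtain ⟨c, rfl⟩ := (Submodule.mem_span_range_iff_exists_fun ℝ).1 hx
  refine Finset.sum_congr rfl fun i _ => ?_
  rw [hv.inner_right_fintype]

lemma parseval {k : ℕ} {H : Submodule ℝ (EuclideanSpace ℝ (Fin n))}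
    (hH : Module.finrank ℝ H = k) {v : Fin k → EuclideanSpace ℝ (Fin n)}
    (hv : Orthonormal ℝ v) (hvH : ∀ i, v i ∈ H) {x : EuclideanSpace ℝ (Fin n)} (hx : x ∈ H)
    (y : EuclideanSpace ℝ (Fin n)) :
    ⟪x, y⟫ = ∑ i, ⟪v i, x⟫ * ⟪v i, y⟫ := by
  conv_lhs => rw [← expand hH hv hvH hx]
  simp [sum_inner, real_inner_smul_left]

lemma exists_isom {H : Submodule ℝ (EuclideanSpace ℝ (Fin n))} {a b : EuclideanSpace ℝ (Fin n)}
    (ha : a ∈ H) (hb : b ∈ H) (hab : ‖a‖ = ‖b‖) :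
    ∃ f : EuclideanSpace ℝ (Fin n) ≃ₗᵢ[ℝ] EuclideanSpace ℝ (Fin n), f a = b ∧
      f ⁻¹' (sph H) = sph H := by
  set f := Submodule.reflection (ℝ ∙ (a - b))ᗮ with hf
  have hfH : ∀ x ∈ H, f x ∈ H := by
    intro x hx
    rw [hf, Submodule.reflection_orthogonal_apply, Submodule.reflection_singleton_apply]
    have := H.sub_mem ha hb
    exact H.neg_mem (H.sub_mem (H.smul_of_tower_mem _ (H.smul_mem _ this)) hx)
  refine ⟨f, Submodule.reflection_sub hab, ?_⟩
  ext x
  simp only [sph, Set.mem_preimage, Set.mem_inter_iff, mem_sphere_zero_iff_norm,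
    LinearIsometryEquiv.norm_map, SetLike.mem_coe]
  refine and_congr_right fun _ => ⟨fun h => ?_, hfH x⟩
  have := hfH _ h
  rwa [hf, Submodule.reflection_reflection] at this

lemma mp_isom {H : Submodule ℝ (EuclideanSpace ℝ (Fin n))} (d : ℝ)
    (f : EuclideanSpace ℝ (Fin n) ≃ₗᵢ[ℝ] EuclideanSpace ℝ (Fin n)) (hf : f ⁻¹' (sph H) = sph H) :
    MeasurePreserving f (μH[d].restrict (sph H)) (μH[d].restrict (sph H)) := by
  have h := (f.toIsometryEquiv.measurePreserving_hausdorffMeasure d).restrict_preimage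
    (isCompact_sph H).measurableSet
  have e : (f.toIsometryEquiv : EuclideanSpace ℝ (Fin n) → EuclideanSpace ℝ (Fin n)) = f := rfl
  rw [e, hf] at h
  exact h

lemma sph_finite {m : ℕ} {H : Submodule ℝ (EuclideanSpace ℝ (Fin n))}
    (hH : Module.finrank ℝ H = m + 1) {v : Fin (m + 1) → EuclideanSpace ℝ (Fin n)}
    (hv : Orthonormal ℝ v) (hvH : ∀ i, v i ∈ H) :
    μH[(m : ℝ)] (sph H) < ⊤ := by
  let q : Fin (m + 1) → Bool → (Fin m → ℝ) → EuclideanSpace ℝ (Fin n) := fun i s y =>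
    (if s then (1 : ℝ) else -1) • v i + ∑ j, y j • v (i.succAbove j)
  let g : Fin (m + 1) → Bool → (Fin m → ℝ) → EuclideanSpace ℝ (Fin n) := fun i s y =>
    ‖q i s y‖⁻¹ • q i s y
  let D : Set (Fin m → ℝ) := Set.Icc (fun _ => -1) (fun _ => 1)
  have hq0 : ∀ i s y, q i s y ≠ 0 := by
    intro i s y h
    have h2 : ⟪v i, q i s y⟫ = 0 := by rw [h, inner_zero_right]
    simp only [q, inner_add_right, inner_sum, real_inner_smul_right] at h2
    have h3 : ∀ j, ⟪v i, v (i.succAbove j)⟫ = 0 := fun j => hv.2 (Fin.succAbove_ne i j).symm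
    simp only [h3, mul_zero, Finset.sum_const_zero, add_zero, real_inner_self_eq_norm_sq, hv.1] at h2
    cases s <;> simp at h2
  have hcov : sph H ⊆ ⋃ i, ⋃ s, g i s '' D := by
    rintro x ⟨hx1, hxH⟩
    have hx1 : ‖x‖ = 1 := by simpa using hx1
    obtain ⟨i, -, hi⟩ := Finset.exists_max_image Finset.univ (fun i => |⟪v i, x⟫|)
      Finset.univ_nonempty
    have hex := expand hH hv hvH hxH
    have hne : ⟪v i, x⟫ ≠ 0 := by
      intro h0
      have : x = 0 := by
        rw [← hex]
        refine Finset.sum_eq_zero fun j _ => ?_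
        have := hi j (Finset.mem_univ _)
        rw [h0, abs_zero] at this
        rw [abs_nonpos_iff.1 this, zero_smul]
      rw [this] at hx1
      simp at hx1
    have hpos : 0 < |⟪v i, x⟫| := abs_pos.2 hne
    simp only [Set.mem_iUnion]
    refine ⟨i, decide (0 < ⟪v i, x⟫), fun j => ⟪v (i.succAbove j), x⟫ / |⟪v i, x⟫|, ?_, ?_⟩
    · simp only [D, Set.mem_Icc, Pi.le_def]
      refine ⟨fun j => ?_, fun j => ?_⟩
      · rw [le_div_iff₀ hpos]
        have := neg_abs_le (⟪v (i.succAbove j), x⟫)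
        have := hi (i.succAbove j) (Finset.mem_univ _)
        linarith
      · rw [div_le_iff₀ hpos]
        have := le_abs_self (⟪v (i.succAbove j), x⟫)
        have := hi (i.succAbove j) (Finset.mem_univ _)
        linarith
    · have hqx : q i (decide (0 < ⟪v i, x⟫)) (fun j => ⟪v (i.succAbove j), x⟫ / |⟪v i, x⟫|)
          = |⟪v i, x⟫|⁻¹ • x := by
        conv_rhs => arg 2; rw [← hex, Fin.sum_univ_succAbove _ i]
        rw [smul_add, Finset.smul_sum]
        simp only [q]
        congr 1
        · rw [smul_smul]
          congr 1
          rcases lt_or_gt_of_ne hne with h | h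
          · rw [abs_of_neg h]
            have : ¬ (0 < ⟪v i, x⟫) := not_lt.2 h.le
            simp only [this, decide_false]
            field_simp
            simp
          · rw [abs_of_pos h]
            simp only [h, decide_true]
            field_simp
            simp
        · refine Finset.sum_congr rfl fun j _ => ?_
          rw [smul_smul, div_eq_inv_mul]
      simp only [g, hqx, norm_smul, hx1, mul_one, norm_inv, Real.norm_eq_abs, abs_abs, inv_inv,
        smul_smul]
      rw [mul_inv_cancel₀ hpos.ne', one_smul]
  refine (measure_mono hcov).trans_lt ?_
  rw [← Set.iUnion_prod' (fun p : Fin (m+1) × Bool => g p.1 p.2 '' D)] 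
  refine (measure_iUnion_fintype_le _ _).trans_lt ?_
  refine ENNReal.sum_lt_top.2 fun p _ => ?_
  have hcd : ContDiff ℝ 1 (g p.1 p.2) := by
    have h1 : ContDiff ℝ 1 (q p.1 p.2) := by
      simp only [q]
      fun_prop
    exact ((h1.norm ℝ (hq0 _ _)).inv (fun y => norm_ne_zero_iff.2 (hq0 _ _ y))).smul h1
  obtain ⟨K, hK⟩ := LocallyLipschitzOn.exists_lipschitzOnWith_of_compact
    (isCompact_Icc : IsCompact D) hcd.locallyLipschitz.locallyLipschitzOn
  refine (hK.hausdorffMeasure_image_le (Nat.cast_nonneg m)).trans_lt ?_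
  have hvol : μH[(m : ℝ)] D < ⊤ := by
    have := hausdorffMeasure_pi_real (ι := Fin m)
    rw [Fintype.card_fin] at this
    rw [this]
    exact (isCompact_Icc : IsCompact D).measure_lt_top
  exact ENNReal.mul_lt_top (ENNReal.rpow_lt_top_of_nonneg (Nat.cast_nonneg m) ENNReal.coe_ne_top) hvol

lemma sph_pos {m : ℕ} {H : Submodule ℝ (EuclideanSpace ℝ (Fin n))}
    {v : Fin (m + 1) → EuclideanSpace ℝ (Fin n)}
    (hv : Orthonormal ℝ v) (hvH : ∀ i, v i ∈ H) :
    0 < μH[(m : ℝ)] (sph H) := by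
  let L : EuclideanSpace ℝ (Fin n) →L[ℝ] (Fin m → ℝ) :=
    ContinuousLinearMap.pi fun j => innerSL ℝ (v j.succ)
  have h1 := L.lipschitz.hausdorffMeasure_image_le (Nat.cast_nonneg m) (sph H)
  have h2 : {y : Fin m → ℝ | ∑ j, y j ^ 2 < 1} ⊆ L '' sph H := by
    intro y hy
    have hy : ∑ j, y j ^ 2 < 1 := hy
    set t := Real.sqrt (1 - ∑ j, y j ^ 2) with ht
    let c : Fin (m + 1) → ℝ := Fin.cons t y
    refine ⟨∑ i, c i • v i, ⟨?_, H.sum_mem fun i _ => H.smul_mem _ (hvH i)⟩, ?_⟩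
    · rw [mem_sphere_zero_iff_norm, ← sq_eq_sq₀ (norm_nonneg _) zero_le_one,
        ← real_inner_self_eq_norm_sq, hv.inner_sum, Fin.sum_univ_succ]
      simp only [c, Fin.cons_zero, Fin.cons_succ, starRingEnd_apply, star_trivial]
      rw [ht, Real.mul_self_sqrt (by linarith)]
      simp [← sq]
    · ext j
      simp only [L, ContinuousLinearMap.coe_pi', innerSL_apply_apply]
      rw [hv.inner_right_fintype]
      simp [c]
  have h3 : 0 < μH[(m : ℝ)] {y : Fin m → ℝ | ∑ j, y j ^ 2 < 1} := by
    have := hausdorffMeasure_pi_real (ι := Fin m)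
    rw [Fintype.card_fin] at this
    rw [this]
    refine IsOpen.measure_pos _ ?_ ⟨0, by simp⟩
    exact isOpen_lt (by fun_prop) continuous_const
  have h4 := h3.trans_le ((measure_mono h2).trans h1)
  by_contra h0
  rw [not_lt, nonpos_iff_eq_zero] at h0
  rw [h0, mul_zero] at h4
  exact lt_irrefl _ h4

lemma sph_open_pos {m : ℕ} {H : Submodule ℝ (EuclideanSpace ℝ (Fin n))}
    {v : Fin (m + 1) → EuclideanSpace ℝ (Fin n)}
    (hv : Orthonormal ℝ v) (hvH : ∀ i, v i ∈ H) {U : Set (EuclideanSpace ℝ (Fin n))}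
    (hU : IsOpen U) {x : EuclideanSpace ℝ (Fin n)} (hx : x ∈ sph H) (hxU : x ∈ U) :
    (μH[(m : ℝ)].restrict (sph H)) U ≠ 0 := by
  intro h0
  refine (sph_pos hv hvH).ne' ?_
  have : (μH[(m : ℝ)].restrict (sph H)) (sph H) = 0 := by
    refine measure_null_of_locally_null _ fun y hy => ?_
    have hxn : ‖x‖ = 1 := by simpa using hx.1
    have hyn : ‖y‖ = 1 := by simpa using hy.1
    obtain ⟨f, hf, hfs⟩ := exists_isom hy.2 hx.2 (hyn.trans hxn.symm)
    refine ⟨f ⁻¹' U, ?_, ?_⟩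
    · exact mem_nhdsWithin_of_mem_nhds ((hU.preimage f.continuous).mem_nhds (by simpa [hf] using hxU))
    · rw [(mp_isom (m : ℝ) f hfs).measure_preimage hU.measurableSet.nullMeasurableSet, h0]
  rwa [Measure.restrict_apply_self] at this

lemma integral_abs_inner {H : Submodule ℝ (EuclideanSpace ℝ (Fin n))} (d : ℝ)
    {e w : EuclideanSpace ℝ (Fin n)} (he : e ∈ H) (he1 : ‖e‖ = 1) (hw : w ∈ H) :
    ∫ s, |⟪w, s⟫| ∂(μH[d].restrict (sph H)) =
      ‖w‖ * ∫ s, |⟪e, s⟫| ∂(μH[d].restrict (sph H)) := by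
  obtain ⟨f, hf, hfs⟩ := exists_isom (H.smul_mem ‖w‖ he) hw (by simp [norm_smul, he1])
  rw [← (mp_isom d f hfs).integral_comp f.toHomeomorph.measurableEmbedding, ← hf,
    ← integral_const_mul]
  congr 1
  ext s
  rw [f.inner_map_map, real_inner_smul_left, abs_mul, f.norm_map, norm_smul, he1, mul_one, norm_norm,
    abs_norm]

end MW

namespace MW

variable {n : ℕ}

lemma integrable_of_compact {ν : Measure (EuclideanSpace ℝ (Fin n))} [IsFiniteMeasure ν]
    {A : Set (EuclideanSpace ℝ (Fin n))} (hA : IsCompact A) (hν : ∀ᵐ x ∂ν, x ∈ A)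
    {f : EuclideanSpace ℝ (Fin n) → ℝ} (hf : Continuous f) : Integrable f ν := by
  obtain ⟨M, hM⟩ := hA.exists_bound_of_continuousOn hf.continuousOn
  exact Integrable.of_bound hf.aestronglyMeasurable M (hν.mono fun x hx => hM x hx)

lemma suppFn_continuous {K : Set (EuclideanSpace ℝ (Fin n))} (hne : K.Nonempty) {R : ℝ}
    (hR : ∀ y ∈ K, ‖y‖ ≤ R) : Continuous (suppFn K) := by
  have hR0 : 0 ≤ R := by
    obtain ⟨y, hy⟩ := hne
    exact (norm_nonneg y).trans (hR y hy)
  have hbdd : ∀ x, BddAbove ((fun y => ⟪x, y⟫) '' K) := by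
    intro x
    refine ⟨‖x‖ * R, ?_⟩
    rintro _ ⟨y, hy, rfl⟩
    exact (real_inner_le_norm x y).trans (mul_le_mul_of_nonneg_left (hR y hy) (norm_nonneg x))
  refine (LipschitzWith.of_le_add_mul' R fun x z => ?_).continuous
  refine csSup_le (hne.image _) ?_
  rintro _ ⟨y, hy, rfl⟩
  have h1 : ⟪z, y⟫ ≤ suppFn K z := le_csSup (hbdd z) ⟨y, hy, rfl⟩
  have h2 : ⟪x - z, y⟫ ≤ R * dist x z := by
    rw [dist_eq_norm, mul_comm]
    exact (real_inner_le_norm _ y).trans (mul_le_mul_of_nonneg_left (hR y hy) (norm_nonneg _))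
  rw [inner_sub_left] at h2
  show ⟪x, y⟫ ≤ _
  linarith

lemma suppFn_cube {k : ℕ} {H : Submodule ℝ (EuclideanSpace ℝ (Fin n))}
    (hH : Module.finrank ℝ H = k) {v : Fin k → EuclideanSpace ℝ (Fin n)}
    (hv : Orthonormal ℝ v) (hvH : ∀ i, v i ∈ H) {x : EuclideanSpace ℝ (Fin n)} (hx : x ∈ H)
    {R : ℝ} (hR : 0 ≤ R) :
    suppFn (R • {x | x ∈ H ∧ ∀ i, |⟪x, v i⟫| ≤ 1}) x = R * ∑ i, |⟪v i, x⟫| := by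
  refine IsGreatest.csSup_eq ⟨?_, ?_⟩
  · let c : Fin k → ℝ := fun i => if 0 ≤ ⟪v i, x⟫ then 1 else -1
    have hc : ∀ i, ⟪v i, ∑ j, c j • v j⟫ = c i := fun i => hv.inner_right_fintype c i
    refine ⟨R • ∑ i, c i • v i, Set.smul_mem_smul_set
      ⟨H.sum_mem fun i _ => H.smul_mem _ (hvH i), fun i => ?_⟩, ?_⟩
    · rw [real_inner_comm, hc]
      simp only [c]
      split_ifs <;> simp
    · simp only [real_inner_smul_right]
      rw [parseval hH hv hvH hx]
      congr 1
      refine Finset.sum_congr rfl fun i _ => ?_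
      rw [hc]
      simp only [c]
      split_ifs with h
      · rw [abs_of_nonneg h, mul_one]
      · rw [abs_of_neg (not_le.1 h), mul_neg_one]
  · rintro _ ⟨_, ⟨y, ⟨hyH, hy⟩, rfl⟩, rfl⟩
    simp only [real_inner_smul_right]
    refine mul_le_mul_of_nonneg_left ?_ hR
    rw [parseval hH hv hvH hx]
    refine Finset.sum_le_sum fun i _ => ?_
    refine (le_abs_self _).trans ?_
    rw [abs_mul]
    have := hy i
    rw [real_inner_comm] at this
    exact mul_le_of_le_one_right (abs_nonneg _) this

/-- Even isotropic measures. -/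
structure Iso (μ : Measure (EuclideanSpace ℝ (Fin n))) : Prop where
  fin : IsFiniteMeasure μ
  conc : μ (Metric.sphere (0 : EuclideanSpace ℝ (Fin n)) 1)ᶜ = 0
  iso : ∀ x : EuclideanSpace ℝ (Fin n), ∫ u, ⟪x, u⟫ ^ 2 ∂μ = ‖x‖ ^ 2
  even : Measure.map (fun u => -u) μ = μ

section

variable {μ : Measure (EuclideanSpace ℝ (Fin n))}

lemma supp_eq : msupport μ = μ.support := by
  ext x
  rw [Measure.mem_support_iff_forall]
  rfl

lemma supp_ae : ∀ᵐ u ∂μ, u ∈ msupport μ := by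
  rw [supp_eq]
  exact Measure.support_mem_ae

lemma supp_closed {p : EuclideanSpace ℝ (Fin n) → Prop} (hc : IsClosed {u | p u})
    (h : ∀ᵐ u ∂μ, p u) : ∀ u ∈ msupport μ, p u := by
  rw [supp_eq]
  exact Measure.support_subset_of_isClosed hc h

namespace Iso

lemma ae_sph (hμ : Iso μ) : ∀ᵐ u ∂μ, u ∈ Metric.sphere (0 : EuclideanSpace ℝ (Fin n)) 1 := hμ.conc

lemma integrable (hμ : Iso μ) {f : EuclideanSpace ℝ (Fin n) → ℝ} (hf : Continuous f) :
    Integrable f μ :=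
  haveI := hμ.fin
  integrable_of_compact (isCompact_sphere _ _) hμ.ae_sph hf

lemma supp_neg (hμ : Iso μ) {u : EuclideanSpace ℝ (Fin n)} (hu : u ∈ msupport μ) :
    -u ∈ msupport μ := by
  intro U hU
  have h1 : (fun u => -u) ⁻¹' U ∈ nhds u := continuous_neg.continuousAt hU
  have h2 := hu _ h1
  have h3 := (Homeomorph.neg (EuclideanSpace ℝ (Fin n))).measurableEmbedding.map_apply μ U
  have e : ((Homeomorph.neg (EuclideanSpace ℝ (Fin n))) : EuclideanSpace ℝ (Fin n) → _)
    = fun u => -u := rfl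
  rw [e, hμ.even] at h3
  rwa [h3]

lemma inner_eq (hμ : Iso μ) (x y : EuclideanSpace ℝ (Fin n)) :
    ⟪x, y⟫ = ∫ u, ⟪x, u⟫ * ⟪y, u⟫ ∂μ := by
  have h1 := hμ.iso (x + y)
  rw [norm_add_sq_real, ← hμ.iso x, ← hμ.iso y] at h1
  have e : ∀ u : EuclideanSpace ℝ (Fin n), ⟪x + y, u⟫ ^ 2 =
      (⟪x, u⟫ ^ 2 + 2 * (⟪x, u⟫ * ⟪y, u⟫)) + ⟪y, u⟫ ^ 2 := by
    intro u
    rw [inner_add_left]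
    ring
  simp_rw [e] at h1
  rw [integral_add (hμ.integrable (by fun_prop)) (hμ.integrable (by fun_prop)),
    integral_add (hμ.integrable (by fun_prop)) (hμ.integrable (by fun_prop)),
    integral_const_mul] at h1
  linarith

lemma total (hμ : Iso μ) : ∫ _u, (1 : ℝ) ∂μ = n := by
  have h1 : ∫ _u, (1 : ℝ) ∂μ =
      ∫ u, ∑ i : Fin n, ⟪(EuclideanSpace.basisFun (Fin n) ℝ) i, u⟫ ^ 2 ∂μ := by
    refine integral_congr_ae (hμ.ae_sph.mono fun u hu => ?_)
    have hu : ‖u‖ = 1 := by simpa using hu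
    have := (EuclideanSpace.basisFun (Fin n) ℝ).sum_sq_inner_right u
    simp only [this, hu]
    norm_num
  rw [h1, integral_finsetSum _ (fun i _ => hμ.integrable (by fun_prop))]
  simp_rw [hμ.iso]
  simp

lemma mem_polar (hμ : Iso μ) {x : EuclideanSpace ℝ (Fin n)} :
    x ∈ polarBody (convexHull ℝ (msupport μ)) ↔ ∀ u ∈ msupport μ, |⟪x, u⟫| ≤ 1 := by
  constructor
  · intro h u hu
    rw [abs_le]
    refine ⟨?_, h u (subset_convexHull ℝ _ hu)⟩
    have := h (-u) (subset_convexHull ℝ _ (hμ.supp_neg hu))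
    rw [inner_neg_right] at this
    linarith
  · intro h
    have hc : Convex ℝ {y : EuclideanSpace ℝ (Fin n) | ⟪x, y⟫ ≤ 1} :=
      convex_halfSpace_le (innerSL ℝ x).toLinearMap.isLinear 1
    exact fun y hy => convexHull_min (fun u hu => (abs_le.1 (h u hu)).2) hc hy

lemma inner_le (hμ : Iso μ) {x y : EuclideanSpace ℝ (Fin n)}
    (hy : ∀ u ∈ msupport μ, |⟪y, u⟫| ≤ 1) : ⟪x, y⟫ ≤ ∫ u, |⟪x, u⟫| ∂μ := by
  rw [hμ.inner_eq]
  refine integral_mono_ae (hμ.integrable (by fun_prop)) (hμ.integrable (by fun_prop))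
    (supp_ae.mono fun u hu => ?_)
  refine (le_abs_self _).trans ?_
  rw [abs_mul]
  exact mul_le_of_le_one_right (abs_nonneg _) (hy u hu)

lemma norm_le (hμ : Iso μ) {y : EuclideanSpace ℝ (Fin n)}
    (hy : ∀ u ∈ msupport μ, |⟪y, u⟫| ≤ 1) : ‖y‖ ≤ Real.sqrt n := by
  apply Real.le_sqrt_of_sq_le
  rw [← hμ.iso, ← hμ.total]
  refine integral_mono_ae (hμ.integrable (by fun_prop)) (hμ.integrable (by fun_prop))
    (supp_ae.mono fun u hu => ?_)
  have := hy u hu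
  show ⟪y, u⟫ ^ 2 ≤ 1
  rw [← sq_abs]
  exact pow_le_one₀ (abs_nonneg _) this

end Iso

end

/-- Orthogonal projection onto the span of an orthonormal family. -/
noncomputable def proj {k : ℕ} (v : Fin k → EuclideanSpace ℝ (Fin n))
    (u : EuclideanSpace ℝ (Fin n)) : EuclideanSpace ℝ (Fin n) := ∑ i, ⟪v i, u⟫ • v i

section

variable {μ : Measure (EuclideanSpace ℝ (Fin n))} {k : ℕ}
  {H : Submodule ℝ (EuclideanSpace ℝ (Fin n))} {v : Fin k → EuclideanSpace ℝ (Fin n)}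

lemma proj_continuous : Continuous (proj v) := by
  unfold proj
  fun_prop

lemma proj_mem (hvH : ∀ i, v i ∈ H) (u : EuclideanSpace ℝ (Fin n)) : proj v u ∈ H :=
  H.sum_mem fun i _ => H.smul_mem _ (hvH i)

lemma inner_proj (hH : Module.finrank ℝ H = k) (hv : Orthonormal ℝ v) (hvH : ∀ i, v i ∈ H)
    {x : EuclideanSpace ℝ (Fin n)} (hx : x ∈ H) (u : EuclideanSpace ℝ (Fin n)) :
    ⟪x, proj v u⟫ = ⟪x, u⟫ := by
  rw [parseval hH hv hvH hx, parseval hH hv hvH hx]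
  refine Finset.sum_congr rfl fun i _ => ?_
  rw [proj, hv.inner_right_fintype]

lemma norm_proj_sq (hv : Orthonormal ℝ v) (u : EuclideanSpace ℝ (Fin n)) :
    ‖proj v u‖ ^ 2 = ∑ i, ⟪v i, u⟫ ^ 2 := by
  rw [← real_inner_self_eq_norm_sq, proj, hv.inner_sum]
  simp [sq]

lemma Iso.int_proj_sq (hμ : Iso μ) (hv : Orthonormal ℝ v) :
    ∫ u, ‖proj v u‖ ^ 2 ∂μ = k := by
  simp_rw [norm_proj_sq hv]
  rw [integral_finsetSum _ (fun i _ => hμ.integrable (by fun_prop))]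
  simp_rw [hμ.iso, hv.1]
  simp

/-- The Cauchy-Schwarz defect. -/
lemma Iso.int_defect (hμ : Iso μ) (hv : Orthonormal ℝ v) {R : ℝ} (hR : R ^ 2 * k = n) :
    ∫ u, (R * ‖proj v u‖ - 1) ^ 2 ∂μ = 2 * (n - R * ∫ u, ‖proj v u‖ ∂μ) := by
  have hc : Continuous fun u => ‖proj v u‖ := proj_continuous.norm
  have e : ∀ u, (R * ‖proj v u‖ - 1) ^ 2 =
      (R ^ 2 * ‖proj v u‖ ^ 2 - 2 * R * ‖proj v u‖) + 1 := fun u => by ring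
  simp_rw [e]
  rw [integral_add (hμ.integrable (by fun_prop)) (hμ.integrable (by fun_prop)),
    integral_sub (hμ.integrable (by fun_prop)) (hμ.integrable (by fun_prop)),
    integral_const_mul, integral_const_mul, hμ.int_proj_sq hv, hμ.total, hR]
  ring

/-- Rigidity. -/
lemma Iso.eq_cube (hμ : Iso μ) (hH : Module.finrank ℝ H = k) (hv : Orthonormal ℝ v)
    (hvH : ∀ i, v i ∈ H) {R : ℝ} (hR : 0 < R)
    (h1 : ∀ u ∈ msupport μ, R * ‖proj v u‖ = 1)
    (h2 : ∀ x ∈ sph H, ∫ u, |⟪x, u⟫| ∂μ ≤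
      suppFn (polarBody (convexHull ℝ (msupport μ)) ∩ (H : Set (EuclideanSpace ℝ (Fin n)))) x) :
    ∃ B' : Set (EuclideanSpace ℝ (Fin n)), IsCube H k B' ∧
      polarBody (convexHull ℝ (msupport μ)) ∩ (H : Set (EuclideanSpace ℝ (Fin n))) = R • B' := by
  set Q : EuclideanSpace ℝ (Fin n) → EuclideanSpace ℝ (Fin n) := fun u => R • proj v u with hQ
  have hQH : ∀ u, Q u ∈ H := fun u => H.smul_mem _ (proj_mem hvH u)
  have hQn : ∀ u ∈ msupport μ, ‖Q u‖ = 1 := by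
    intro u hu
    rw [hQ, norm_smul, Real.norm_of_nonneg hR.le, h1 u hu]
  have hQi : ∀ x ∈ H, ∀ u, ⟪x, Q u⟫ = R * ⟪x, u⟫ := by
    intro x hx u
    rw [hQ, real_inner_smul_right, inner_proj hH hv hvH hx]
  have key : ∀ u₀ ∈ msupport μ, ∀ u ∈ msupport μ,
      |⟪Q u₀, Q u⟫| * (1 - |⟪Q u₀, Q u⟫|) = 0 := by
    intro u₀ hu₀
    set x := Q u₀ with hx
    have hxs : x ∈ sph H := ⟨by simpa using hQn u₀ hu₀, hQH u₀⟩
    have hcx : Continuous fun u => ⟪x, Q u⟫ := by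
      have := proj_continuous (v := v)
      simp only [hQ]
      fun_prop
    refine supp_closed (isClosed_eq (by fun_prop) continuous_const) ?_
    have hle : suppFn (polarBody (convexHull ℝ (msupport μ)) ∩
        (H : Set (EuclideanSpace ℝ (Fin n)))) x ≤ R := by
      refine csSup_le ⟨_, 0, ⟨by simp [hμ.mem_polar], H.zero_mem⟩, rfl⟩ ?_
      rintro _ ⟨y, ⟨hy, hyH⟩, rfl⟩
      show ⟪x, y⟫ ≤ R
      rw [real_inner_comm, hx, hQi y hyH]
      exact mul_le_of_le_one_right hR.le ((abs_le.1 (hμ.mem_polar.1 hy u₀ hu₀)).2)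
    have hge := (h2 x hxs).trans hle
    have hint : ∫ u, |⟪x, Q u⟫| * (1 - |⟪x, Q u⟫|) ∂μ ≤ 0 := by
      have e : ∀ u, |⟪x, Q u⟫| * (1 - |⟪x, Q u⟫|) = R * |⟪x, u⟫| - R ^ 2 * ⟪x, u⟫ ^ 2 := by
        intro u
        rw [hQi x hxs.2, abs_mul, abs_of_pos hR, ← sq_abs (⟪x, u⟫)]
        ring
      simp_rw [e]
      rw [integral_sub (hμ.integrable (by fun_prop)) (hμ.integrable (by fun_prop)),
        integral_const_mul, integral_const_mul, hμ.iso, hQn u₀ hu₀]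
      nlinarith
    have hnn : 0 ≤ᵐ[μ] fun u => |⟪x, Q u⟫| * (1 - |⟪x, Q u⟫|) := by
      refine supp_ae.mono fun u hu => ?_
      have : |⟪x, Q u⟫| ≤ 1 := by
        have := abs_real_inner_le_norm x (Q u)
        rwa [hQn u₀ hu₀, hQn u hu, one_mul] at this
      exact mul_nonneg (abs_nonneg _) (by linarith)
    have := (integral_eq_zero_iff_of_nonneg_ae hnn (hμ.integrable (by fun_prop))).1
      (le_antisymm hint (integral_nonneg_of_ae hnn))
    exact this
  set T := Q '' msupport μ with hT
  have keyT : ∀ s ∈ T, ∀ t ∈ T, ⟪s, t⟫ = 0 ∨ s = t ∨ s = -t := by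
    rintro _ ⟨a, ha, rfl⟩ _ ⟨b, hb, rfl⟩
    rcases mul_eq_zero.1 (key a ha b hb) with h | h
    · exact Or.inl (abs_eq_zero.1 h)
    · right
      have h : |⟪Q a, Q b⟫| = 1 := by linarith
      rcases (abs_eq zero_le_one).1 h with h | h
      · exact Or.inl ((inner_eq_one_iff_of_norm_eq_one (𝕜 := ℝ) (hQn a ha) (hQn b hb)).1 h)
      · refine Or.inr ((inner_eq_one_iff_of_norm_eq_one (𝕜 := ℝ) (hQn a ha)
          (by rw [norm_neg]; exact hQn b hb)).1 ?_)
        rw [inner_neg_right, h, neg_neg]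
  have hspanT : Submodule.span ℝ T = H := by
    have hle : Submodule.span ℝ T ≤ H := by
      rw [Submodule.span_le]
      rintro _ ⟨u, -, rfl⟩
      exact hQH u
    have h := Submodule.sup_orthogonal_inf_of_hasOrthogonalProjection hle
    have hb : (Submodule.span ℝ T)ᗮ ⊓ H = ⊥ := by
      rw [eq_bot_iff]
      rintro x ⟨hx1, hxH⟩
      have h0 : ∀ u ∈ msupport μ, ⟪x, u⟫ = 0 := by
        intro u hu
        have := (Submodule.mem_orthogonal' _ _).1 hx1 (Q u) (Submodule.subset_span ⟨u, hu, rfl⟩)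
        rw [hQi x hxH] at this
        exact (mul_eq_zero.1 this).resolve_left hR.ne'
      have : ‖x‖ ^ 2 = 0 := by
        rw [← hμ.iso]
        refine integral_eq_zero_of_ae (supp_ae.mono fun u hu => ?_)
        simp [h0 u hu]
      simpa using this
    rwa [hb, sup_bot_eq] at h
  obtain ⟨b, hbT, hbs, hbi⟩ := exists_linearIndependent ℝ T
  rw [hspanT] at hbs
  have hbo : Orthonormal ℝ (Subtype.val : b → EuclideanSpace ℝ (Fin n)) := by
    refine ⟨fun s => ?_, fun s t hst => ?_⟩
    · obtain ⟨u, hu, hu2⟩ := hbT s.2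
      rw [← hu2]
      exact hQn u hu
    · rcases keyT s (hbT s.2) t (hbT t.2) with h | h | h
      · exact h
      · exact absurd (Subtype.ext h) hst
      · exfalso
        refine hbi.notMem_span_image (s := {t}) (x := s) (by simpa using hst) ?_
        rw [h]
        exact Submodule.neg_mem _ (Submodule.subset_span ⟨t, rfl, rfl⟩)
  have hfin : Finite b := hbi.finite
  haveI := Fintype.ofFinite b
  have hcard : Fintype.card b = k := by
    have := finrank_span_eq_card hbi
    rw [Subtype.range_coe, hbs, hH] at this
    exact this.symm
  let e : Fin k ≃ b := (Fintype.equivFinOfCardEq hcard).symm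
  let w : Fin k → EuclideanSpace ℝ (Fin n) := fun i => (e i : EuclideanSpace ℝ (Fin n))
  have hw : Orthonormal ℝ w := hbo.comp e e.injective
  have hwT : ∀ i, w i ∈ T := fun i => hbT (e i).2
  have hwH : ∀ i, w i ∈ H := by
    intro i
    obtain ⟨u, -, hu⟩ := hwT i
    rw [← hu]
    exact hQH u
  refine ⟨_, ⟨w, hw, hwH, rfl⟩, ?_⟩
  ext x
  rw [Set.mem_smul_set_iff_inv_smul_mem₀ hR.ne']
  simp only [Set.mem_inter_iff, SetLike.mem_coe, Set.mem_setOf_eq, hμ.mem_polar]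
  have hHx : R⁻¹ • x ∈ H ↔ x ∈ H := H.smul_mem_iff (inv_ne_zero hR.ne')
  rw [hHx, and_comm]
  refine and_congr_right fun hxH => ?_
  have hu : ∀ u, ⟪x, u⟫ = ⟪R⁻¹ • x, Q u⟫ := by
    intro u
    rw [hQi _ (hHx.2 hxH), real_inner_smul_left, mul_inv_cancel_left₀ hR.ne']
  constructor
  · intro h i
    obtain ⟨u, hus, hue⟩ := hwT i
    rw [← hue, ← hu]
    exact h u hus
  · intro h u hus
    rw [hu]
    by_cases hex : ∃ i, Q u = w i ∨ Q u = - w i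
    · obtain ⟨i, hi | hi⟩ := hex
      · rw [hi]; exact h i
      · rw [hi, inner_neg_right, abs_neg]; exact h i
    · push Not at hex
      exfalso
      have h0 : Q u = 0 := by
        rw [← expand hH hw hwH (hQH u)]
        refine Finset.sum_eq_zero fun i _ => ?_
        rcases keyT (Q u) ⟨u, hus, rfl⟩ (w i) (hwT i) with h | h | h
        · rw [real_inner_comm, h, zero_smul]
        · exact absurd h (hex i).1
        · exact absurd h (hex i).2
      have := hQn u hus
      rw [h0] at this
      simp at this

end

end MW

namespace MW

variable {n m : ℕ} {μ : Measure (EuclideanSpace ℝ (Fin n))}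
  {H : Submodule ℝ (EuclideanSpace ℝ (Fin n))} {v : Fin (m + 1) → EuclideanSpace ℝ (Fin n)}

lemma ae_mem_sph (d : ℝ) : ∀ᵐ s ∂(μH[d].restrict (sph H)), s ∈ sph H :=
  ae_restrict_mem (isCompact_sph H).measurableSet

lemma sph_isFinite (hH : Module.finrank ℝ H = m + 1) (hv : Orthonormal ℝ v)
    (hvH : ∀ i, v i ∈ H) : IsFiniteMeasure (μH[(m : ℝ)].restrict (sph H)) :=
  ⟨by rw [Measure.restrict_apply_univ]; exact sph_finite hH hv hvH⟩

lemma sph_integrable (hH : Module.finrank ℝ H = m + 1) (hv : Orthonormal ℝ v)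
    (hvH : ∀ i, v i ∈ H) {f : EuclideanSpace ℝ (Fin n) → ℝ} (hf : Continuous f) :
    Integrable f (μH[(m : ℝ)].restrict (sph H)) :=
  haveI := sph_isFinite hH hv hvH
  integrable_of_compact (isCompact_sph H) (ae_mem_sph _) hf

lemma sph_zero (hH : Module.finrank ℝ H = m + 1) (hv : Orthonormal ℝ v)
    (hvH : ∀ i, v i ∈ H) {f : EuclideanSpace ℝ (Fin n) → ℝ} (hf : Continuous f)
    (h0 : ∀ x ∈ sph H, 0 ≤ f x) (hi : ∫ s, f s ∂(μH[(m : ℝ)].restrict (sph H)) ≤ 0) :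
    ∀ x ∈ sph H, f x = 0 := by
  have hnn : 0 ≤ᵐ[μH[(m : ℝ)].restrict (sph H)] f := (ae_mem_sph _).mono h0
  have hz := (integral_eq_zero_iff_of_nonneg_ae hnn (sph_integrable hH hv hvH hf)).1
    (le_antisymm hi (integral_nonneg_of_ae hnn))
  intro x hx
  by_contra hne
  exact sph_open_pos hv hvH (isOpen_ne_fun hf continuous_const) hx hne hz

lemma c_pos (hH : Module.finrank ℝ H = m + 1) (hv : Orthonormal ℝ v)
    (hvH : ∀ i, v i ∈ H) : 0 < ∫ s, |⟪v 0, s⟫| ∂(μH[(m : ℝ)].restrict (sph H)) := by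
  by_contra h
  have := sph_zero hH hv hvH (f := fun s => |⟪v 0, s⟫|) (by fun_prop) (fun _ _ => abs_nonneg _)
    (not_lt.1 h) (v 0) ⟨by simp [hv.1], hvH 0⟩
  simp [hv.1] at this

lemma int_cube (hH : Module.finrank ℝ H = m + 1) (hv : Orthonormal ℝ v) (hvH : ∀ i, v i ∈ H)
    {w : Fin (m + 1) → EuclideanSpace ℝ (Fin n)} (hw : Orthonormal ℝ w) (hwH : ∀ i, w i ∈ H)
    {R : ℝ} (hR : 0 ≤ R) :
    ∫ s, suppFn (R • {x | x ∈ H ∧ ∀ i, |⟪x, w i⟫| ≤ 1}) s ∂(μH[(m : ℝ)].restrict (sph H)) =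
      R * ((m + 1 : ℕ) * ∫ s, |⟪v 0, s⟫| ∂(μH[(m : ℝ)].restrict (sph H))) := by
  rw [integral_congr_ae ((ae_mem_sph _).mono fun s hs => suppFn_cube hH hw hwH hs.2 hR),
    integral_const_mul, integral_finsetSum _
      (fun i _ => sph_integrable hH hv hvH (by fun_prop))]
  simp_rw [integral_abs_inner (m : ℝ) (hvH 0) (hv.1 0) (hwH _), hw.1]
  simp

lemma Iso.g_continuous (hμ : Iso μ) : Continuous fun x => ∫ u, |⟪x, u⟫| ∂μ := by
  refine (LipschitzWith.of_le_add_mul' (n : ℝ) fun x z => ?_).continuous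
  rw [← hμ.total, mul_comm, ← integral_const_mul, ← integral_add (hμ.integrable (by fun_prop))
    (hμ.integrable (by fun_prop))]
  refine integral_mono_ae (hμ.integrable (by fun_prop)) (hμ.integrable (by fun_prop))
    (hμ.ae_sph.mono fun u hu => ?_)
  have hu : ‖u‖ = 1 := by simpa using hu
  have h1 := abs_real_inner_le_norm (x - z) u
  rw [inner_sub_left, hu] at h1
  have h2 := abs_sub_abs_le_abs_sub (⟪x, u⟫) (⟪z, u⟫)
  rw [dist_eq_norm]
  show |⟪x, u⟫| ≤ |⟪z, u⟫| + ‖x - z‖ * 1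
  linarith

lemma Iso.int_g (hμ : Iso μ) (hH : Module.finrank ℝ H = m + 1) (hv : Orthonormal ℝ v)
    (hvH : ∀ i, v i ∈ H) :
    ∫ s, ∫ u, |⟪s, u⟫| ∂μ ∂(μH[(m : ℝ)].restrict (sph H)) =
      (∫ u, ‖proj v u‖ ∂μ) * ∫ s, |⟪v 0, s⟫| ∂(μH[(m : ℝ)].restrict (sph H)) := by
  haveI := sph_isFinite hH hv hvH
  haveI := hμ.fin
  rw [integral_integral_swap]
  · rw [← integral_mul_const]
    congr 1
    ext u
    rw [← integral_abs_inner (m : ℝ) (hvH 0) (hv.1 0) (proj_mem hvH u)]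
    refine integral_congr_ae ((ae_mem_sph _).mono fun s hs => ?_)
    show |⟪s, u⟫| = |⟪proj v u, s⟫|
    rw [← inner_proj hH hv hvH hs.2, real_inner_comm]
  · have hc : Continuous (Function.uncurry fun s u : EuclideanSpace ℝ (Fin n) => |⟪s, u⟫|) := by
      simp only [Function.uncurry_def]
      fun_prop
    refine Integrable.of_bound hc.aestronglyMeasurable 1 ?_
    have h1 := Measure.quasiMeasurePreserving_fst (μ := μH[(m : ℝ)].restrict (sph H)) (ν := μ)
      |>.ae (ae_mem_sph (H := H) (m : ℝ))
    have h2 := Measure.quasiMeasurePreserving_snd (μ := μH[(m : ℝ)].restrict (sph H)) (ν := μ)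
      |>.ae hμ.ae_sph
    filter_upwards [h1, h2] with z hz1 hz2
    have hz1 : ‖z.1‖ = 1 := by simpa using hz1.1
    have hz2 : ‖z.2‖ = 1 := by simpa using hz2
    have := abs_real_inner_le_norm z.1 z.2
    rw [hz1, hz2, one_mul] at this
    simpa [Function.uncurry_def] using this

lemma core (hμ : Iso μ) (hH : Module.finrank ℝ H = m + 1) (hv : Orthonormal ℝ v)
    (hvH : ∀ i, v i ∈ H) {R : ℝ} (hR : 0 < R) (hRn : R ^ 2 * (m + 1 : ℕ) = n)
    {K : Set (EuclideanSpace ℝ (Fin n))}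
    (hK : K = polarBody (convexHull ℝ (msupport μ)) ∩ (H : Set (EuclideanSpace ℝ (Fin n)))) :
    (∫ s, suppFn K s ∂(μH[(m : ℝ)].restrict (sph H)) ≤
      R * ((m + 1 : ℕ) * ∫ s, |⟪v 0, s⟫| ∂(μH[(m : ℝ)].restrict (sph H)))) ∧
    (∫ s, suppFn K s ∂(μH[(m : ℝ)].restrict (sph H)) =
      R * ((m + 1 : ℕ) * ∫ s, |⟪v 0, s⟫| ∂(μH[(m : ℝ)].restrict (sph H))) ↔
      ∃ B' : Set (EuclideanSpace ℝ (Fin n)), IsCube H (m + 1) B' ∧ K = R • B') := by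
  have hne : K.Nonempty := ⟨0, by rw [hK]; exact ⟨by simp [hμ.mem_polar], H.zero_mem⟩⟩
  have hcK : Continuous (suppFn K) := by
    refine suppFn_continuous hne (R := Real.sqrt n) fun y hy => ?_
    rw [hK] at hy
    exact hμ.norm_le (hμ.mem_polar.1 hy.1)
  have hle : ∀ x, suppFn K x ≤ ∫ u, |⟪x, u⟫| ∂μ := by
    intro x
    refine csSup_le (hne.image _) ?_
    rintro _ ⟨y, hy, rfl⟩
    rw [hK] at hy
    exact hμ.inner_le (hμ.mem_polar.1 hy.1)
  have hcg := hμ.g_continuous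
  have hI : ∫ s, suppFn K s ∂(μH[(m : ℝ)].restrict (sph H)) ≤
      ∫ s, ∫ u, |⟪s, u⟫| ∂μ ∂(μH[(m : ℝ)].restrict (sph H)) :=
    integral_mono (sph_integrable hH hv hvH hcK) (sph_integrable hH hv hvH hcg) hle
  have hc := c_pos hH hv hvH
  have hdef := hμ.int_defect hv hRn
  have hdn : 0 ≤ ∫ u, (R * ‖proj v u‖ - 1) ^ 2 ∂μ := integral_nonneg fun u => sq_nonneg _
  have hP : ∫ u, ‖proj v u‖ ∂μ ≤ R * (m + 1 : ℕ) := by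
    have : R * ∫ u, ‖proj v u‖ ∂μ ≤ R * (R * (m + 1 : ℕ)) := by
      rw [← mul_assoc, ← sq, hRn]
      linarith
    exact le_of_mul_le_mul_left this hR
  have hg := hμ.int_g hH hv hvH
  set c := ∫ s, |⟪v 0, s⟫| ∂(μH[(m : ℝ)].restrict (sph H))
  have hPc := mul_le_mul_of_nonneg_right hP hc.le
  rw [← mul_assoc]
  refine ⟨by linarith, ?_, ?_⟩
  · intro heq
    rw [hK]
    refine hμ.eq_cube hH hv hvH hR ?_ ?_
    · have hPe : ∫ u, ‖proj v u‖ ∂μ = R * (m + 1 : ℕ) := by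
        have : R * (m + 1 : ℕ) * c ≤ (∫ u, ‖proj v u‖ ∂μ) * c := by linarith
        exact le_antisymm hP (le_of_mul_le_mul_right this hc)
      rw [hPe, ← mul_assoc, ← sq, hRn, sub_self, mul_zero] at hdef
      have hcP : Continuous fun u => ‖proj v u‖ := proj_continuous.norm
      have h0 := (integral_eq_zero_iff_of_nonneg (fun u => sq_nonneg _)
        (hμ.integrable (((continuous_const.mul hcP).sub continuous_const).pow 2))).1 hdef
      refine supp_closed (isClosed_eq (by fun_prop) continuous_const) (h0.mono fun u hu => ?_)
      have hu : (R * ‖proj v u‖ - 1) ^ 2 = 0 := hu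
      have := pow_eq_zero_iff (two_ne_zero) |>.1 hu
      linarith
    · intro x hx
      rw [← hK]
      have h0 := sph_zero hH hv hvH (f := fun s => (∫ u, |⟪s, u⟫| ∂μ) - suppFn K s)
        (hcg.sub hcK) (fun s _ => sub_nonneg.2 (hle s)) (by
          rw [integral_sub (sph_integrable hH hv hvH hcg) (sph_integrable hH hv hvH hcK)]
          linarith) x hx
      have h0 : (∫ u, |⟪x, u⟫| ∂μ) - suppFn K x = 0 := h0
      linarith
  · rintro ⟨B', ⟨w, hw, hwH, rfl⟩, hKB⟩
    rw [hKB, int_cube hH hv hvH hw hwH hR.le, mul_assoc]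

end MW

theorem stmt14 (n k : ℕ) (μ : Measure (EuclideanSpace ℝ (Fin n))) [IsFiniteMeasure μ]
    (hsph : μ (Metric.sphere (0 : EuclideanSpace ℝ (Fin n)) 1)ᶜ = 0)
    (hiso : ∀ x : EuclideanSpace ℝ (Fin n), ∫ u, ⟪x, u⟫ ^ 2 ∂μ = ‖x‖ ^ 2)
    (heven : Measure.map (fun u => -u) μ = μ)
    (H : Submodule ℝ (EuclideanSpace ℝ (Fin n))) (hH : Module.finrank ℝ H = k)
    (C : Set (EuclideanSpace ℝ (Fin n))) (hC : C = convexHull ℝ (msupport μ))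
    (B : Set (EuclideanSpace ℝ (Fin n))) (hB : IsCube H k B) :
    meanWidthIn H k (polarBody C ∩ (H : Set (EuclideanSpace ℝ (Fin n)))) ≤
        Real.sqrt ((n : ℝ) / k) * meanWidthIn H k B ∧
      (meanWidthIn H k (polarBody C ∩ (H : Set (EuclideanSpace ℝ (Fin n)))) =
          Real.sqrt ((n : ℝ) / k) * meanWidthIn H k B ↔
        ∃ B' : Set (EuclideanSpace ℝ (Fin n)), IsCube H k B' ∧
          polarBody C ∩ (H : Set (EuclideanSpace ℝ (Fin n))) =
            Real.sqrt ((n : ℝ) / k) • B') := by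
  subst hC
  have hμ : MW.Iso μ := ⟨inferInstance, hsph, hiso, heven⟩
  rcases k with _ | m
  · have hbot : H = ⊥ := Submodule.finrank_eq_zero.1 hH
    have h0 : ∀ K, meanWidthIn H 0 K = 0 := fun K => by simp [meanWidthIn]
    simp only [h0, mul_zero, le_refl, true_and, true_iff]
    refine ⟨{x | x ∈ H ∧ ∀ i : Fin 0, |⟪x, (Fin.elim0 i : EuclideanSpace ℝ (Fin n))⟫| ≤ 1},
      ⟨fun i => Fin.elim0 i, ⟨fun i => Fin.elim0 i, fun i => Fin.elim0 i⟩,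
        fun i => Fin.elim0 i, rfl⟩, ?_⟩
    have h1 : {x | x ∈ H ∧ ∀ i : Fin 0, |⟪x, (Fin.elim0 i : EuclideanSpace ℝ (Fin n))⟫| ≤ 1}
        = {0} := by
      ext x
      simp [hbot]
    rw [h1, Set.smul_set_singleton, smul_zero, hbot]
    ext x
    simp only [Set.mem_inter_iff, SetLike.mem_coe, Submodule.mem_bot, Set.mem_singleton_iff,
      and_iff_right_iff_imp]
    rintro rfl
    simp [hμ.mem_polar]
  · obtain ⟨v, hv, hvH, rfl⟩ := hB
    have hkn : m + 1 ≤ n := by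
      have := Submodule.finrank_le H
      rw [hH, finrank_euclideanSpace_fin] at this
      exact this
    have hn : (0 : ℝ) < n := by exact_mod_cast (Nat.succ_pos m).trans_le hkn
    have hk : (0 : ℝ) < ((m + 1 : ℕ) : ℝ) := by exact_mod_cast Nat.succ_pos m
    have hR : 0 < Real.sqrt ((n : ℝ) / (m + 1 : ℕ)) := Real.sqrt_pos.2 (div_pos hn hk)
    have hRn : Real.sqrt ((n : ℝ) / (m + 1 : ℕ)) ^ 2 * (m + 1 : ℕ) = n := by
      rw [Real.sq_sqrt (div_pos hn hk).le, div_mul_cancel₀ _ hk.ne']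
    have hω : 0 < omegaBall (m + 1) :=
      ENNReal.toReal_pos (Metric.measure_ball_pos _ _ one_pos).ne' measure_ball_lt_top.ne
    have ha : 0 < 2 / (((m + 1 : ℕ) : ℝ) * omegaBall (m + 1)) := by positivity
    have hcore := MW.core hμ hH hv hvH hR hRn rfl
    have hcube := MW.int_cube hH hv hvH hv hvH (R := 1) zero_le_one
    rw [one_smul, one_mul] at hcube
    have hd : ((m + 1 : ℕ) : ℝ) - 1 = m := by push_cast; ring
    rw [← hcube] at hcore
    unfold meanWidthIn
    rw [hd]
    rw [mul_left_comm (Real.sqrt _)]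
    refine ⟨mul_le_mul_of_nonneg_left hcore.1 ha.le, ?_⟩
    rw [mul_right_inj' ha.ne']
    exact hcore.2
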